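/- Let F = FreeGroup (Fin q), A = FreeAlgebra ℚ (Fin q) with generators X_1, …, X_q, I the two-sided ideal generated by the X_i, and A_m = A ⧸ I^m. Let θ : F → A_mˣ be any group homomorphism such that for every i the element θ(x_i) − 1 − X_i lies in the image of I² in A_m (i.e., θ is a Magnus expansion modulo I^m). Then there exists a ℚ-algebra automorphism S of A_m such that M_m(g) = S(θ(g)) in A_m for every g ∈ F, where M_m is the standard Magnus expansion sending x_i to 1 + X_i. -/

import Mathlib

noncomputable section

/-- The two-sided ideal of the free algebra `ℚ⟨X_1, …, X_q⟩` generated by the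
generators `X_1, …, X_q`, as a ℚ-submodule. -/
def magnusIdeal (q : ℕ) : Submodule ℚ (FreeAlgebra ℚ (Fin q)) :=
  ⊤ * Submodule.span ℚ (Set.range (FreeAlgebra.ι ℚ)) * ⊤

/-- Congruence modulo `I^m`. -/
def magnusRel (q m : ℕ) (a b : FreeAlgebra ℚ (Fin q)) : Prop :=
  a - b ∈ magnusIdeal q ^ m

/-- The truncated algebra `A_m = ℚ⟨X_1, …, X_q⟩ ⧸ I^m`. -/
abbrev MagnusQuot (q m : ℕ) := RingQuot (magnusRel q m)

/-- The quotient map `A → A_m`. -/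
def magnusMk (q m : ℕ) : FreeAlgebra ℚ (Fin q) →ₐ[ℚ] MagnusQuot q m :=
  RingQuot.mkAlgHom ℚ (magnusRel q m)

/-- If `T - id` maps `B` into `J` and each `J ^ k` into `J ^ (k + 1)`, and some power of `J`
vanishes, then `T` is bijective. -/
theorem bijective_of_sub_mem_pow_succ {R B : Type*} [CommRing R] [Ring B] [Algebra R B]
    (J : Submodule R B) {m : ℕ} (hJ : J ^ m = ⊥) (T : B →ₗ[R] B)
    (h0 : ∀ b, T b - b ∈ J) (hk : ∀ k, ∀ b ∈ J ^ k, T b - b ∈ J ^ (k + 1)) :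
    Function.Bijective T := by
  have key : ∀ k, ∀ b, ((T - 1) ^ (k + 1)) b ∈ J ^ (k + 1) := by
    intro k
    induction k with
    | zero => intro b; simpa using h0 b
    | succ k ih =>
      intro b
      rw [pow_succ' (T - 1), Module.End.mul_apply]
      exact hk _ _ (ih b)
  have hnil : IsNilpotent (T - 1) := by
    refine ⟨m + 1, LinearMap.ext fun b => ?_⟩
    have := key m b
    rw [pow_succ J, hJ, Submodule.bot_mul] at this
    simpa using this
  have hunit : IsUnit T := by simpa using hnil.isUnit_add_one
  exact (Module.End.isUnit_iff T).mp hunit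

/-- An algebra endomorphism congruent to the identity modulo `J` on the whole algebra and modulo
`J ^ 2` on `J` is congruent to the identity modulo `J ^ (k + 1)` on `J ^ k`. -/
theorem AlgHom.sub_mem_pow_succ {R B : Type*} [CommRing R] [Ring B] [Algebra R B]
    (J : Submodule R B) (T : B →ₐ[R] B)
    (h0 : ∀ b, T b - b ∈ J) (h1 : ∀ b ∈ J, T b - b ∈ J ^ 2) (k : ℕ) :
    ∀ b ∈ J ^ k, T b - b ∈ J ^ (k + 1) := by
  induction k with
  | zero =>
    intro b hb
    obtain ⟨r, rfl⟩ := Submodule.mem_one.mp (by simpa using hb)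
    simp
  | succ k ih =>
    intro b hb
    rw [pow_succ] at hb
    induction hb using Submodule.mul_induction_on' with
    | mem_mul_mem x hx y hy =>
      have hTy : T y ∈ J := by simpa using J.add_mem (h0 y) hy
      have e : T (x * y) - x * y = (T x - x) * T y + x * (T y - y) := by
        rw [map_mul, sub_mul, mul_sub, sub_add_sub_cancel]
      rw [e]
      refine Submodule.add_mem _ ?_ ?_
      · rw [pow_succ]; exact Submodule.mul_mem_mul (ih x hx) hTy
      · rw [add_assoc, pow_add]; exact Submodule.mul_mem_mul hx (h1 y hy)
    | add x _ y _ hx hy =>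
      have e : T (x + y) - (x + y) = (T x - x) + (T y - y) := by rw [map_add]; abel
      rw [e]; exact Submodule.add_mem _ hx hy

/-- The image of the augmentation ideal in the truncated algebra. -/
def magnusQuotIdeal (q m : ℕ) : Submodule ℚ (MagnusQuot q m) :=
  (magnusIdeal q).map (magnusMk q m).toLinearMap

theorem magnusMk_surjective (q m : ℕ) : Function.Surjective (magnusMk q m) :=
  RingQuot.mkAlgHom_surjective ℚ _

theorem ι_mem_magnusIdeal (q : ℕ) (i : Fin q) : FreeAlgebra.ι ℚ i ∈ magnusIdeal q := by
  have := Submodule.mul_mem_mul (Submodule.mul_mem_mul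
    (Submodule.mem_top (R := ℚ) (x := (1 : FreeAlgebra ℚ (Fin q))))
    (Submodule.subset_span (R := ℚ) (Set.mem_range_self (f := FreeAlgebra.ι ℚ) i)))
    (Submodule.mem_top (R := ℚ) (x := (1 : FreeAlgebra ℚ (Fin q))))
  simpa [magnusIdeal] using this

theorem magnusQuotIdeal_eq (q m : ℕ) :
    magnusQuotIdeal q m =
      ⊤ * Submodule.span ℚ (Set.range fun i => magnusMk q m (FreeAlgebra.ι ℚ i)) * ⊤ := by
  have htop : (⊤ : Submodule ℚ (FreeAlgebra ℚ (Fin q))).map (magnusMk q m).toLinearMap = ⊤ := by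
    rw [Submodule.map_top, LinearMap.range_eq_top]
    exact magnusMk_surjective q m
  rw [magnusQuotIdeal, magnusIdeal, Submodule.map_mul, Submodule.map_mul, htop,
    Submodule.map_span, ← Set.range_comp]
  rfl

theorem mul_mem_magnusQuotIdeal_left {q m : ℕ} (a : MagnusQuot q m) {b : MagnusQuot q m}
    (hb : b ∈ magnusQuotIdeal q m) : a * b ∈ magnusQuotIdeal q m := by
  have h := Submodule.mul_mem_mul (Submodule.mem_top (R := ℚ) (x := a)) hb
  rw [magnusQuotIdeal_eq] at h ⊢
  rw [← mul_assoc, ← mul_assoc] at h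
  exact SetLike.le_def.mp (mul_le_mul_left (mul_le_mul_left le_top _) _) h

theorem mul_mem_magnusQuotIdeal_right {q m : ℕ} {a : MagnusQuot q m} (b : MagnusQuot q m)
    (ha : a ∈ magnusQuotIdeal q m) : a * b ∈ magnusQuotIdeal q m := by
  have h := Submodule.mul_mem_mul ha (Submodule.mem_top (R := ℚ) (x := b))
  rw [magnusQuotIdeal_eq] at h ⊢
  rw [mul_assoc] at h
  exact SetLike.le_def.mp (mul_le_mul_right le_top _) h

theorem magnusQuotIdeal_sq_le (q m : ℕ) : magnusQuotIdeal q m ^ 2 ≤ magnusQuotIdeal q m := by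
  rw [sq]
  exact Submodule.mul_le.mpr fun a _ b hb => mul_mem_magnusQuotIdeal_left a hb

theorem mul_mem_magnusQuotIdeal_sq_left {q m : ℕ} (a : MagnusQuot q m) {b : MagnusQuot q m}
    (hb : b ∈ magnusQuotIdeal q m ^ 2) : a * b ∈ magnusQuotIdeal q m ^ 2 := by
  rw [sq] at hb ⊢
  induction hb using Submodule.mul_induction_on' with
  | mem_mul_mem x hx y hy =>
    rw [← mul_assoc]
    exact Submodule.mul_mem_mul (mul_mem_magnusQuotIdeal_left a hx) hy
  | add x _ y _ hx hy => rw [mul_add]; exact Submodule.add_mem _ hx hy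

theorem mul_mem_magnusQuotIdeal_sq_right {q m : ℕ} {a : MagnusQuot q m} (b : MagnusQuot q m)
    (ha : a ∈ magnusQuotIdeal q m ^ 2) : a * b ∈ magnusQuotIdeal q m ^ 2 := by
  rw [sq] at ha ⊢
  induction ha using Submodule.mul_induction_on' with
  | mem_mul_mem x hx y hy =>
    rw [mul_assoc]
    exact Submodule.mul_mem_mul hx (mul_mem_magnusQuotIdeal_right b hy)
  | add x _ y _ hx hy => rw [add_mul]; exact Submodule.add_mem _ hx hy

theorem magnusMk_ι_mem (q m : ℕ) (i : Fin q) :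
    magnusMk q m (FreeAlgebra.ι ℚ i) ∈ magnusQuotIdeal q m :=
  Submodule.mem_map_of_mem (f := (magnusMk q m).toLinearMap) (ι_mem_magnusIdeal q i)

theorem magnusQuotIdeal_pow_eq_bot (q m : ℕ) : magnusQuotIdeal q m ^ m = ⊥ := by
  rw [magnusQuotIdeal, ← Submodule.map_pow, eq_bot_iff]
  rintro _ ⟨a, ha, rfl⟩
  have h : magnusMk q m a = magnusMk q m 0 :=
    RingQuot.mkAlgHom_rel ℚ (show magnusRel q m a 0 by simpa [magnusRel] using ha)
  simpa using h

/-- The algebra endomorphism of `A_m` sending each `X_i` to a given element of the image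
of `I`. -/
def magnusQuotLift {q m : ℕ} (f : Fin q → MagnusQuot q m) (hf : ∀ i, f i ∈ magnusQuotIdeal q m) :
    MagnusQuot q m →ₐ[ℚ] MagnusQuot q m :=
  RingQuot.liftAlgHom ℚ ⟨FreeAlgebra.lift ℚ f, fun a b hab => by
    have hI : (magnusIdeal q).map (FreeAlgebra.lift ℚ f).toLinearMap ≤ magnusQuotIdeal q m := by
      rw [magnusIdeal, Submodule.map_mul, Submodule.map_mul]
      refine Submodule.mul_le.mpr fun x hx y _ => mul_mem_magnusQuotIdeal_right y ?_
      refine Submodule.mul_le.mpr (fun u _ v hv => mul_mem_magnusQuotIdeal_left u ?_) hx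
      rw [Submodule.map_span] at hv
      refine Submodule.span_le.mpr ?_ hv
      rintro _ ⟨_, ⟨i, rfl⟩, rfl⟩
      simpa using hf i
    have h : FreeAlgebra.lift ℚ f (a - b) ∈
        (magnusIdeal q ^ m).map (FreeAlgebra.lift ℚ f).toLinearMap :=
      Submodule.mem_map_of_mem (f := (FreeAlgebra.lift ℚ f).toLinearMap) hab
    rw [Submodule.map_pow] at h
    have h' := pow_le_pow_left' hI m h
    rw [magnusQuotIdeal_pow_eq_bot, Submodule.mem_bot, map_sub] at h'
    exact sub_eq_zero.mp h'⟩

theorem magnusQuotLift_ι {q m : ℕ} (f : Fin q → MagnusQuot q m)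
    (hf : ∀ i, f i ∈ magnusQuotIdeal q m) (i : Fin q) :
    magnusQuotLift f hf (magnusMk q m (FreeAlgebra.ι ℚ i)) = f i := by
  simp [magnusQuotLift, magnusMk]

/-- An algebra endomorphism of `A_m` that fixes every `X_i` modulo the image of `I²` is
bijective. -/
theorem bijective_of_sub_ι_mem_sq {q m : ℕ} (T : MagnusQuot q m →ₐ[ℚ] MagnusQuot q m)
    (hT : ∀ i, T (magnusMk q m (FreeAlgebra.ι ℚ i)) - magnusMk q m (FreeAlgebra.ι ℚ i) ∈
      magnusQuotIdeal q m ^ 2) :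
    Function.Bijective T := by
  have hmul : ∀ a b, T (a * b) - a * b = (T a - a) * T b + a * (T b - b) := by
    intro a b; rw [map_mul, sub_mul, mul_sub, sub_add_sub_cancel]
  have hadd : ∀ a b, T (a + b) - (a + b) = (T a - a) + (T b - b) := by
    intro a b; rw [map_add]; abel
  have h0 : ∀ b, T b - b ∈ magnusQuotIdeal q m := by
    intro b
    obtain ⟨c, rfl⟩ := magnusMk_surjective q m b
    induction c using FreeAlgebra.induction with
    | grade0 r => simp
    | grade1 i => exact magnusQuotIdeal_sq_le q m (hT i)
    | mul a b ha hb =>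
      rw [map_mul, hmul]
      exact Submodule.add_mem _ (mul_mem_magnusQuotIdeal_right _ ha)
        (mul_mem_magnusQuotIdeal_left _ hb)
    | add a b ha hb => rw [map_add, hadd]; exact Submodule.add_mem _ ha hb
  have hTJ : ∀ b ∈ magnusQuotIdeal q m, T b ∈ magnusQuotIdeal q m := fun b hb => by
    simpa using Submodule.add_mem _ (h0 b) hb
  have hspan : ∀ x ∈ Submodule.span ℚ (Set.range fun i => magnusMk q m (FreeAlgebra.ι ℚ i)),
      x ∈ magnusQuotIdeal q m ∧ T x - x ∈ magnusQuotIdeal q m ^ 2 := by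
    intro x hx
    induction hx using Submodule.span_induction with
    | mem x hx => obtain ⟨i, rfl⟩ := hx; exact ⟨magnusMk_ι_mem q m i, hT i⟩
    | zero => simp
    | add x y _ _ hx hy =>
      rw [hadd]
      exact ⟨Submodule.add_mem _ hx.1 hy.1, Submodule.add_mem _ hx.2 hy.2⟩
    | smul r x _ hx =>
      have e : T (r • x) - r • x = r • (T x - x) := by
        simp only [Algebra.smul_def, hmul, AlgHom.commutes, sub_self, zero_mul, zero_add]
      rw [e]
      exact ⟨Submodule.smul_mem _ _ hx.1, Submodule.smul_mem _ _ hx.2⟩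
  have hleft : ∀ x ∈ ⊤ * Submodule.span ℚ (Set.range fun i => magnusMk q m (FreeAlgebra.ι ℚ i)),
      x ∈ magnusQuotIdeal q m ∧ T x - x ∈ magnusQuotIdeal q m ^ 2 := by
    intro x hx
    induction hx using Submodule.mul_induction_on' with
    | mem_mul_mem a _ x hx =>
      obtain ⟨hxJ, hxN⟩ := hspan x hx
      refine ⟨mul_mem_magnusQuotIdeal_left a hxJ, ?_⟩
      rw [hmul]
      refine Submodule.add_mem _ ?_ (mul_mem_magnusQuotIdeal_sq_left a hxN)
      rw [sq]
      exact Submodule.mul_mem_mul (h0 a) (hTJ x hxJ)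
    | add x _ y _ hx hy =>
      rw [hadd]
      exact ⟨Submodule.add_mem _ hx.1 hy.1, Submodule.add_mem _ hx.2 hy.2⟩
  have h1 : ∀ b ∈ magnusQuotIdeal q m, T b - b ∈ magnusQuotIdeal q m ^ 2 := by
    intro x hx
    rw [magnusQuotIdeal_eq] at hx
    induction hx using Submodule.mul_induction_on' with
    | mem_mul_mem x hx b _ =>
      obtain ⟨hxJ, hxN⟩ := hleft x hx
      rw [hmul]
      refine Submodule.add_mem _ (mul_mem_magnusQuotIdeal_sq_right _ hxN) ?_
      rw [sq]
      exact Submodule.mul_mem_mul hxJ (h0 b)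
    | add x _ y _ hx hy => rw [hadd]; exact Submodule.add_mem _ hx hy
  exact bijective_of_sub_mem_pow_succ (magnusQuotIdeal q m) (magnusQuotIdeal_pow_eq_bot q m)
    T.toLinearMap h0
    (AlgHom.sub_mem_pow_succ _ T h0 h1)

/-- Remark 4.1(1) (Kawazumi): any Magnus expansion `θ : F → A_mˣ` modulo `I^m`
(i.e. a group homomorphism with `θ(x_i) - 1 - X_i ∈ I²` for every `i`) differs from the
standard Magnus expansion `M_m : x_i ↦ 1 + X_i` by a ℚ-algebra automorphism `S` of `A_m`:
`M_m(g) = S(θ(g))` for all `g ∈ F`. -/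
theorem magnus_expansions_differ_by_automorphism (q m : ℕ)
    (θ : FreeGroup (Fin q) →* (MagnusQuot q m)ˣ)
    (hθ : ∀ i : Fin q, ((θ (FreeGroup.of i) : (MagnusQuot q m)ˣ) : MagnusQuot q m)
            - 1 - magnusMk q m (FreeAlgebra.ι ℚ i) ∈
            (magnusIdeal q ^ 2).map (magnusMk q m).toLinearMap)
    (M : FreeGroup (Fin q) →* (MagnusQuot q m)ˣ)
    (hM : ∀ i : Fin q, ((M (FreeGroup.of i) : (MagnusQuot q m)ˣ) : MagnusQuot q m)
            = 1 + magnusMk q m (FreeAlgebra.ι ℚ i)) :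
    ∃ S : MagnusQuot q m ≃ₐ[ℚ] MagnusQuot q m,
      ∀ g : FreeGroup (Fin q),
        ((M g : (MagnusQuot q m)ˣ) : MagnusQuot q m) =
          S ((θ g : (MagnusQuot q m)ˣ) : MagnusQuot q m) := by
  have hθ' : ∀ i, ((θ (FreeGroup.of i) : (MagnusQuot q m)ˣ) : MagnusQuot q m)
      - 1 - magnusMk q m (FreeAlgebra.ι ℚ i) ∈ magnusQuotIdeal q m ^ 2 := by
    intro i
    rw [magnusQuotIdeal, ← Submodule.map_pow]
    exact hθ i
  have hf : ∀ i, ((θ (FreeGroup.of i) : (MagnusQuot q m)ˣ) : MagnusQuot q m) - 1 ∈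
      magnusQuotIdeal q m := fun i => by
    simpa using Submodule.add_mem _ (magnusQuotIdeal_sq_le q m (hθ' i)) (magnusMk_ι_mem q m i)
  set T := magnusQuotLift _ hf with hTdef
  have hTι : ∀ i, T (magnusMk q m (FreeAlgebra.ι ℚ i)) =
      ((θ (FreeGroup.of i) : (MagnusQuot q m)ˣ) : MagnusQuot q m) - 1 := magnusQuotLift_ι _ hf
  have hbij : Function.Bijective T :=
    bijective_of_sub_ι_mem_sq T fun i => by rw [hTι]; exact hθ' i
  have hcomp : (Units.map (T : MagnusQuot q m →* MagnusQuot q m)).comp M = θ := by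
    refine FreeGroup.ext_hom _ _ fun i => Units.ext ?_
    simp [hM, hTι]
  refine ⟨(AlgEquiv.ofBijective T hbij).symm, fun g => ?_⟩
  rw [AlgEquiv.eq_symm_apply, ← hcomp]
  rfl
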